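/- Let Γ ⊂ SO(k) be a nontrivial finite group acting freely on the unit sphere S^{k-1}. There exists an angle θ₀ > 0, depending only on Γ, such that for every geodesic loop in the smooth part of ℝ^k/Γ (i.e., a line segment in ℝ^k joining two distinct points x and g·x of the same Γ-orbit, with g ≠ id), the angle between the two tangent vectors of the loop at its base point is at least θ₀. -/

import Mathlib

theorem stmt3_aux {k : ℕ}
    (g : EuclideanSpace ℝ (Fin k) ≃ₗᵢ[ℝ] EuclideanSpace ℝ (Fin k))
    (hg : ∀ x : EuclideanSpace ℝ (Fin k), x ≠ 0 → g x ≠ x) :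
    ∃ c : ℝ, 0 < c ∧ ∀ y : EuclideanSpace ℝ (Fin k), y ≠ 0 →
      c ≤ InnerProductGeometry.angle (g y) y := by
  have hpos : ∀ y : EuclideanSpace ℝ (Fin k), y ≠ 0 →
      0 < InnerProductGeometry.angle (g y) y := by
    intro y hy
    refine lt_of_le_of_ne (InnerProductGeometry.angle_nonneg _ _) fun h => hg y hy ?_
    obtain ⟨-, r, hr, h2⟩ := InnerProductGeometry.angle_eq_zero_iff.1 h.symm
    have h3 : ‖y‖ = r * ‖y‖ := by
      conv_lhs => rw [h2]
      rw [norm_smul, g.norm_map, Real.norm_of_nonneg hr.le]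
    have hn : ‖y‖ ≠ 0 := norm_ne_zero_iff.2 hy
    have hr1 : r = 1 := by
      apply mul_right_cancel₀ hn
      rw [← h3, one_mul]
    rw [hr1, one_smul] at h2
    exact h2.symm
  have hunit : ∀ y : EuclideanSpace ℝ (Fin k), y ≠ 0 →
      ‖y‖⁻¹ • y ∈ Metric.sphere (0 : EuclideanSpace ℝ (Fin k)) 1 := by
    intro y hy
    simp [norm_smul, hy]
  by_cases hne : (Metric.sphere (0 : EuclideanSpace ℝ (Fin k)) 1).Nonempty
  · have hcont : ContinuousOn (fun y => InnerProductGeometry.angle (g y) y)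
        (Metric.sphere (0 : EuclideanSpace ℝ (Fin k)) 1) := by
      intro y hy
      have hy0 : y ≠ 0 := by
        rintro rfl
        simp at hy
      have hgy : g y ≠ 0 := by simpa using hy0
      have h1 : ContinuousAt (fun y => (g y, y)) y :=
        (g.continuous.prodMk continuous_id).continuousAt
      exact (ContinuousAt.comp (f := fun y => (g y, y))
        (InnerProductGeometry.continuousAt_angle (x := (g y, y)) hgy hy0) h1).continuousWithinAt
    obtain ⟨z, hz, hmin⟩ := (isCompact_sphere _ _).exists_isMinOn hne hcont
    have hz0 : z ≠ 0 := by
      rintro rfl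
      simp at hz
    refine ⟨_, hpos z hz0, fun y hy => ?_⟩
    have h := hmin (hunit y hy)
    have hp : 0 < ‖y‖⁻¹ := by positivity
    simpa [map_smul, InnerProductGeometry.angle_smul_left_of_pos _ _ hp,
      InnerProductGeometry.angle_smul_right_of_pos _ _ hp, hy] using h
  · exact ⟨1, one_pos, fun y hy => (hne ⟨_, hunit y hy⟩).elim⟩

/-- For a nontrivial finite group `Γ ⊂ SO(k)` acting freely on the unit sphere, there is an angle
`θ₀ > 0`, depending only on `Γ`, bounding below the angle at the base point of any geodesic loop
in the smooth part of `ℝ^k/Γ`.  Such a loop lifts to a segment from `x ≠ 0` to `g x` with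
`g ≠ 1`; its two tangent vectors at the base point are `g x − x` (outgoing) and `x − g⁻¹ x`
(incoming, transported back by `g⁻¹`). -/
theorem stmt3 {k : ℕ} (hk : 2 ≤ k)
    (Γ : Subgroup (EuclideanSpace ℝ (Fin k) ≃ₗᵢ[ℝ] EuclideanSpace ℝ (Fin k)))
    (hfin : (Γ : Set (EuclideanSpace ℝ (Fin k) ≃ₗᵢ[ℝ] EuclideanSpace ℝ (Fin k))).Finite)
    (hnt : Γ ≠ ⊥)
    (hSO : ∀ g ∈ Γ, LinearMap.det
      ((g : EuclideanSpace ℝ (Fin k) ≃ₗᵢ[ℝ] EuclideanSpace ℝ (Fin k)).toLinearEquiv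
        : EuclideanSpace ℝ (Fin k) →ₗ[ℝ] EuclideanSpace ℝ (Fin k)) = 1)
    (hfree : ∀ g ∈ Γ, g ≠ 1 → ∀ x : EuclideanSpace ℝ (Fin k), x ≠ 0 → g x ≠ x) :
    ∃ θ₀ > 0, ∀ g ∈ Γ, g ≠ 1 → ∀ x : EuclideanSpace ℝ (Fin k), x ≠ 0 →
      θ₀ ≤ InnerProductGeometry.angle (g x - x) (x - g⁻¹ x) := by
  classical
  have hc : ∀ g : EuclideanSpace ℝ (Fin k) ≃ₗᵢ[ℝ] EuclideanSpace ℝ (Fin k), ∃ c : ℝ, 0 < c ∧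
      (g ∈ Γ → g ≠ 1 → ∀ y : EuclideanSpace ℝ (Fin k), y ≠ 0 →
        c ≤ InnerProductGeometry.angle (g y) y) := by
    intro g
    by_cases h : g ∈ Γ ∧ g ≠ 1
    · obtain ⟨c, hc, h2⟩ := stmt3_aux g (hfree g h.1 h.2)
      exact ⟨c, hc, fun _ _ => h2⟩
    · exact ⟨1, one_pos, fun h1 h2 => (h ⟨h1, h2⟩).elim⟩
  choose c hc0 hc using hc
  obtain ⟨g₀, -, hmin⟩ := Set.exists_min_image _ c hfin ⟨1, Γ.one_mem⟩
  refine ⟨c g₀, hc0 g₀, fun g hg hg1 x hx => (hmin g hg).trans ?_⟩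
  have hgg : g (g⁻¹ x) = x := g.apply_symm_apply x
  have hy : x - g⁻¹ x ≠ 0 := by
    intro h
    have h2 : g⁻¹ x = x := (sub_eq_zero.1 h).symm
    rw [h2] at hgg
    exact hfree g hg hg1 x hx hgg
  have h := hc g hg hg1 _ hy
  rwa [map_sub, hgg] at h
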